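/- Let p be a prime. Then the number of pairs (i, j) of natural numbers with 1 ≤ i < j ≤ p² + p and C(j(p−1), i(p−1)) ≢ 0 (mod p) equals p(p+1)(p²+p+2)/8. -/

import Mathlib

/-!
Write `p = r + 1`. The multiples `i * r` and `(j - i) * r` have three base-`p` digits, and by
Kummer's theorem `p ∤ C(j * r, i * r)` says that no carry occurs when they are added, that is, that
their digit vectors `a` and `b` satisfy `a k + b k ≤ r` for all `k`. Both digit sums are positive
multiples of `r`, and together they are less than `3 * r` because `j * r < p ^ 3 - 1`, so each of
them equals `r`. Hence the pairs `(i, j)` correspond to pairs `(a, b)` of weak compositions of `r`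
into three parts with `a + b ≤ r`.

Among all pairs of compositions of `r`, at most one column sum `a k + b k` exceeds `r`, since the
column sums add up to `2 * r`. If it does, the excess `a k + b k - r - 1` together with the entries
outside column `k` is an arbitrary composition of `r - 1` into five parts. So the count is
`C(r + 2, 2) ^ 2 - 3 * C(r + 3, 4)`.
-/

open Finset

section DigitVectors

variable {b d r : ℕ} {a : Fin d → ℕ}

/-- The `d` lowest digits of `n` in base `b`, least significant first. -/
def digitVec (b d n : ℕ) : Fin d → ℕ := fun k ↦ n / b ^ (k : ℕ) % b

/-- The number whose base-`b` digits, least significant first, are the entries of `a`; the entries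
may be `b` or larger. -/
def ofDigitVec (b : ℕ) (a : Fin d → ℕ) : ℕ := ∑ k, a k * b ^ (k : ℕ)

lemma digitVec_lt (hb : 0 < b) (d n : ℕ) (k : Fin d) : digitVec b d n k < b :=
  Nat.mod_lt _ hb

lemma ofDigitVec_add (b : ℕ) (a a' : Fin d → ℕ) :
    ofDigitVec b (a + a') = ofDigitVec b a + ofDigitVec b a' := by
  simp only [ofDigitVec, Pi.add_apply, add_mul, sum_add_distrib]

lemma ofDigitVec_lt (ha : ∀ k, a k < b) : ofDigitVec b a < b ^ d :=
  (finFunctionFinEquiv fun k ↦ ⟨a k, ha k⟩).isLt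

lemma ofDigitVec_digitVec {n : ℕ} (hn : n < b ^ d) : ofDigitVec b (digitVec b d n) = n :=
  congrArg Fin.val (finFunctionFinEquiv.apply_symm_apply ⟨n, hn⟩)

lemma digitVec_ofDigitVec (ha : ∀ k, a k < b) : digitVec b d (ofDigitVec b a) = a :=
  funext fun k ↦ congrArg Fin.val
    (congrFun (finFunctionFinEquiv.symm_apply_apply fun k ↦ ⟨a k, ha k⟩) k)

lemma ofDigitVec_eq_zero_iff (hb : b ≠ 0) : ofDigitVec b a = 0 ↔ ∑ k, a k = 0 := by
  simp [ofDigitVec, hb]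

lemma ofDigitVec_modEq_sum (r : ℕ) (a : Fin d → ℕ) :
    ofDigitVec (r + 1) a ≡ ∑ k, a k [MOD r] := by
  have pow_modEq_one (k : ℕ) : (r + 1) ^ k ≡ 1 [MOD r] := by
    simpa using Nat.ModEq.pow k (Nat.add_modEq_left : r + 1 ≡ 1 [MOD r])
  exact Nat.ModEq.sum fun k _ ↦ by simpa using (pow_modEq_one k).mul_left (a k)

lemma dvd_ofDigitVec_iff : r ∣ ofDigitVec (r + 1) a ↔ r ∣ ∑ k, a k :=
  (ofDigitVec_modEq_sum r a).dvd_iff dvd_rfl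

lemma ofDigitVec_const_add_one (d r : ℕ) :
    ofDigitVec (r + 1) (fun _ : Fin d ↦ r) + 1 = (r + 1) ^ d := by
  rw [ofDigitVec, ← mul_sum, Fin.sum_univ_eq_sum_range, mul_comm, geom_sum_mul_add]

lemma ofDigitVec_add_one_lt_iff (ha : ∀ k, a k ≤ r) :
    ofDigitVec (r + 1) a + 1 < (r + 1) ^ d ↔ ∑ k, a k < d * r := by
  have hval (k : Fin d) : a k * (r + 1) ^ (k : ℕ) ≤ r * (r + 1) ^ (k : ℕ) :=
    Nat.mul_le_mul_right _ (ha k)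
  have hsum : ∑ _k : Fin d, r = d * r := by simp
  rw [← ofDigitVec_const_add_one, ← hsum, Nat.add_lt_add_iff_right,
    (sum_le_sum fun k _ ↦ ha k).lt_iff_ne, ofDigitVec, ofDigitVec,
    (sum_le_sum fun k _ ↦ hval k).lt_iff_ne, Ne, Ne,
    sum_eq_sum_iff_of_le fun k _ ↦ ha k, sum_eq_sum_iff_of_le fun k _ ↦ hval k]
  simp

end DigitVectors

section Binomial

variable {p d : ℕ}

lemma not_dvd_choose_iff_le (hp : p.Prime) {n k : ℕ} (hn : n < p) :
    ¬ p ∣ n.choose k ↔ k ≤ n := by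
  refine ⟨fun h ↦ ?_, fun hk h ↦ ?_⟩
  · contrapose! h
    simp [Nat.choose_eq_zero_of_lt h]
  · have : p ∣ n.factorial :=
      h.trans (Nat.choose_mul_factorial_mul_factorial hk ▸ (dvd_mul_right _ _).mul_right _)
    exact hn.not_ge (hp.dvd_factorial.1 this)

lemma not_dvd_choose_iff_digitVec_le (hp : p.Prime) {n k : ℕ} (hn : n < p ^ d) (hk : k < p ^ d) :
    ¬ p ∣ n.choose k ↔ digitVec p d k ≤ digitVec p d n := by
  have : Fact p.Prime := ⟨hp⟩
  rw [(Choose.choose_modEq_prod_range_choose_nat hn hk).dvd_iff dvd_rfl,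
    hp.prime.dvd_finsetProd_iff, Pi.le_def, Fin.forall_iff]
  push Not
  simp only [mem_range, not_dvd_choose_iff_le hp (Nat.mod_lt _ hp.pos), digitVec]

lemma not_dvd_choose_ofDigitVec_add_iff (hp : p.Prime) {a a' : Fin d → ℕ} (ha : ∀ k, a k < p)
    (ha' : ∀ k, a' k < p) (hlt : ofDigitVec p a + ofDigitVec p a' < p ^ d) :
    ¬ p ∣ (ofDigitVec p a + ofDigitVec p a').choose (ofDigitVec p a) ↔
      ∀ k, a k + a' k < p := by
  rw [not_dvd_choose_iff_digitVec_le hp hlt (ofDigitVec_lt ha), digitVec_ofDigitVec ha]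
  refine ⟨fun hle ↦ ?_, fun h ↦ ?_⟩
  · set c := digitVec p d (ofDigitVec p a + ofDigitVec p a')
    have hc (k : Fin d) : c k < p := digitVec_lt hp.pos d _ k
    have hval : ofDigitVec p (c - a) = ofDigitVec p a' := by
      have := ofDigitVec_add p a (c - a)
      rw [add_tsub_cancel_of_le hle, ofDigitVec_digitVec hlt] at this
      exact (Nat.add_left_cancel this).symm
    have hsub : c - a = a' := by
      have hlt_sub (k : Fin d) : (c - a) k < p := (Nat.sub_le _ _).trans_lt (hc k)
      rw [← digitVec_ofDigitVec hlt_sub, hval, digitVec_ofDigitVec ha']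
    have hadd : a + a' = c := by rw [← hsub, add_tsub_cancel_of_le hle]
    exact fun k ↦ (congrFun hadd k).trans_lt (hc k)
  · rw [← ofDigitVec_add, digitVec_ofDigitVec (a := a + a') h]
    exact le_self_add

end Binomial

section Compositions

variable {ι : Type*} [DecidableEq ι]

lemma card_piAntidiag_nat (s : Finset ι) (n : ℕ) :
    #(s.piAntidiag n) = (#s + n - 1).choose n := by
  rw [← card_finsuppAntidiag_nat_eq_choose, finsuppAntidiag, card_map, card_attach]

variable [Fintype ι] {r : ℕ} {k : ι} {x : (ι → ℕ) × (ι → ℕ)} {c : ι ⊕ ι → ℕ}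

variable (ι) in
/-- The pairs of weak compositions of `r` indexed by `ι` all of whose column sums are at most `r`.
For `ι = Fin 3` these are the first two rows of the `3 × 3` semi-magic squares with line sum `r`. -/
def columnBoundedPairs (r : ℕ) : Finset ((ι → ℕ) × (ι → ℕ)) :=
  {x ∈ univ.piAntidiag r ×ˢ univ.piAntidiag r | ∀ k, x.1 k + x.2 k ≤ r}

/-- The pairs of weak compositions of `r` indexed by `ι` whose `k`-th column sum exceeds `r`. -/
def columnExceedingPairs (r : ℕ) (k : ι) : Finset ((ι → ℕ) × (ι → ℕ)) :=
  {x ∈ univ.piAntidiag r ×ˢ univ.piAntidiag r | r < x.1 k + x.2 k}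

lemma mem_columnBoundedPairs :
    x ∈ columnBoundedPairs ι r ↔
      (∑ k, x.1 k = r ∧ ∑ k, x.2 k = r) ∧ ∀ k, x.1 k + x.2 k ≤ r := by
  simp [columnBoundedPairs]

lemma mem_columnExceedingPairs :
    x ∈ columnExceedingPairs r k ↔
      (∑ l, x.1 l = r ∧ ∑ l, x.2 l = r) ∧ r < x.1 k + x.2 k := by
  simp [columnExceedingPairs]

lemma lt_of_mem_columnBoundedPairs (hx : x ∈ columnBoundedPairs ι r) :
    (∀ k, x.1 k < r + 1) ∧ ∀ k, x.2 k < r + 1 := by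
  obtain ⟨-, hle⟩ := mem_columnBoundedPairs.1 hx
  exact ⟨fun k ↦ by have := hle k; omega, fun k ↦ by have := hle k; omega⟩

lemma disjoint_columnExceedingPairs (r : ℕ) {l : ι} (hkl : k ≠ l) :
    Disjoint (columnExceedingPairs r k) (columnExceedingPairs r l) := by
  refine disjoint_left.2 fun x hk hl ↦ ?_
  obtain ⟨⟨h₁, h₂⟩, hk⟩ := mem_columnExceedingPairs.1 hk
  obtain ⟨-, hl⟩ := mem_columnExceedingPairs.1 hl
  have hle : (x.1 k + x.2 k) + (x.1 l + x.2 l) ≤ ∑ m, (x.1 m + x.2 m) :=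
    add_le_sum (f := fun m ↦ x.1 m + x.2 m) (fun _ _ ↦ Nat.zero_le _) (mem_univ k) (mem_univ l) hkl
  rw [sum_add_distrib, h₁, h₂] at hle
  omega

lemma sum_update_add {M : Type*} [AddCommMonoid M] (f : ι → M) (k : ι) (v : M) :
    ∑ l, Function.update f k v l + f k = ∑ l, f l + v := by
  rw [sum_update_of_mem (mem_univ k), ← add_sum_erase univ f (mem_univ k), sdiff_singleton_eq_erase]
  abel

lemma mem_piAntidiag_erase_inl :
    c ∈ (univ.erase (Sum.inl k)).piAntidiag r ↔
      ∑ l, c (Sum.inl l) + ∑ l, c (Sum.inr l) = r ∧ c (Sum.inl k) = 0 := by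
  have hsupp : (∀ i, c i ≠ 0 → i ∈ univ.erase (Sum.inl k)) ↔ c (Sum.inl k) = 0 := by
    simp only [mem_erase, mem_univ, and_true]
    exact ⟨fun h ↦ by_contra fun hne ↦ h _ hne rfl, fun h i hi hik ↦ hi (hik ▸ h)⟩
  rw [mem_piAntidiag, hsupp, ← Fintype.sum_sum_type]
  exact and_congr_left fun h ↦ by rw [sum_erase _ h]

/-- Encodes a pair of compositions of `r + 1` whose column `k` exceeds `r + 1` as a composition of
`r`: column `k` is replaced by its excess over `r + 2`, stored in the slot `Sum.inr k`, while the
slot `Sum.inl k` stays empty. -/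
def columnExcess (r : ℕ) (k : ι) (x : (ι → ℕ) × (ι → ℕ)) : ι ⊕ ι → ℕ :=
  Sum.elim (Function.update x.1 k 0) (Function.update x.2 k (x.1 k + x.2 k - (r + 2)))

/-- The inverse of `columnExcess`: column `k` is recovered from the requirement that both rows sum
to `r + 1`. -/
def ofColumnExcess (r : ℕ) (k : ι) (c : ι ⊕ ι → ℕ) : (ι → ℕ) × (ι → ℕ) :=
  (Function.update (c ∘ Sum.inl) k (r + 1 - ∑ l, c (Sum.inl l)),
    Function.update (c ∘ Sum.inr) k (r + 1 + c (Sum.inr k) - ∑ l, c (Sum.inr l)))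

lemma columnExcess_mem_piAntidiag (hx : x ∈ columnExceedingPairs (r + 1) k) :
    columnExcess r k x ∈ (univ.erase (Sum.inl k)).piAntidiag r := by
  obtain ⟨⟨hsum₁, hsum₂⟩, hk⟩ := mem_columnExceedingPairs.1 hx
  have hupd₁ := sum_update_add x.1 k 0
  have hupd₂ := sum_update_add x.2 k (x.1 k + x.2 k - (r + 2))
  simp only [mem_piAntidiag_erase_inl, columnExcess, Sum.elim_inl, Sum.elim_inr,
    Function.update_self, and_true]
  omega

lemma ofColumnExcess_mem_columnExceedingPairs
    (hc : c ∈ (univ.erase (Sum.inl k)).piAntidiag r) :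
    ofColumnExcess r k c ∈ columnExceedingPairs (r + 1) k := by
  obtain ⟨hsum, hk⟩ := mem_piAntidiag_erase_inl.1 hc
  have hupd₁ := sum_update_add (c ∘ Sum.inl) k (r + 1 - ∑ l, c (Sum.inl l))
  have hupd₂ := sum_update_add (c ∘ Sum.inr) k (r + 1 + c (Sum.inr k) - ∑ l, c (Sum.inr l))
  simp only [Function.comp_apply] at hupd₁ hupd₂
  simp only [mem_columnExceedingPairs, ofColumnExcess, Function.update_self]
  omega

lemma ofColumnExcess_columnExcess (hx : x ∈ columnExceedingPairs (r + 1) k) :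
    ofColumnExcess r k (columnExcess r k x) = x := by
  obtain ⟨⟨hsum₁, hsum₂⟩, -⟩ := mem_columnExceedingPairs.1 hx
  have hupd₁ := sum_update_add x.1 k 0
  have hupd₂ := sum_update_add x.2 k (x.1 k + x.2 k - (r + 2))
  simp only [ofColumnExcess, columnExcess, Sum.elim_comp_inl, Sum.elim_comp_inr, Sum.elim_inl,
    Sum.elim_inr, Function.update_self, Function.update_idem, Prod.ext_iff,
    Function.update_eq_self_iff]
  omega

lemma columnExcess_ofColumnExcess (hc : c ∈ (univ.erase (Sum.inl k)).piAntidiag r) :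
    columnExcess r k (ofColumnExcess r k c) = c := by
  obtain ⟨hsum, hk⟩ := mem_piAntidiag_erase_inl.1 hc
  have hexcess : r + 1 - ∑ l, c (Sum.inl l) + (r + 1 + c (Sum.inr k) - ∑ l, c (Sum.inr l)) -
      (r + 2) = c (Sum.inr k) := by omega
  simp only [columnExcess, ofColumnExcess, Function.update_self, Function.update_idem, hexcess]
  ext (l | l) <;> obtain rfl | hl := eq_or_ne l k <;> simp [*]

lemma card_columnExceedingPairs_succ (r : ℕ) (k : ι) :
    #(columnExceedingPairs (r + 1) k) = (2 * Fintype.card ι + r - 2).choose r := by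
  have hcard : #(univ.erase (Sum.inl k : ι ⊕ ι)) + r - 1 = 2 * Fintype.card ι + r - 2 := by
    have : 0 < Fintype.card ι := Fintype.card_pos_iff.2 ⟨k⟩
    rw [card_erase_of_mem (mem_univ _), card_univ, Fintype.card_sum]
    omega
  rw [← hcard, ← card_piAntidiag_nat]
  exact card_nbij' (columnExcess r k) (ofColumnExcess r k)
    (fun _ ↦ columnExcess_mem_piAntidiag) (fun _ ↦ ofColumnExcess_mem_columnExceedingPairs)
    (fun _ ↦ ofColumnExcess_columnExcess) (fun _ ↦ columnExcess_ofColumnExcess)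

variable (ι) in
lemma card_columnBoundedPairs_succ_add (r : ℕ) :
    #(columnBoundedPairs ι (r + 1)) +
        Fintype.card ι * (2 * Fintype.card ι + r - 2).choose r =
      (Fintype.card ι + r).choose (r + 1) ^ 2 := by
  have hcompl :
      {x ∈ (univ : Finset ι).piAntidiag (r + 1) ×ˢ (univ : Finset ι).piAntidiag (r + 1) |
        ¬ ∀ k, x.1 k + x.2 k ≤ r + 1} = univ.biUnion (columnExceedingPairs (r + 1)) := by
    ext x
    simp only [columnExceedingPairs, mem_filter, mem_biUnion, mem_univ, true_and, not_forall,
      not_le, exists_and_left]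
  have hexceed : #(univ.biUnion (columnExceedingPairs (ι := ι) (r + 1))) =
      Fintype.card ι * (2 * Fintype.card ι + r - 2).choose r := by
    rw [card_biUnion fun k _ l _ hkl ↦ disjoint_columnExceedingPairs _ hkl]
    simp only [card_columnExceedingPairs_succ, sum_const, card_univ, smul_eq_mul]
  rw [← hexceed, ← hcompl, columnBoundedPairs, card_filter_add_card_filter_not, card_product,
    card_piAntidiag_nat, card_univ, ← add_assoc, Nat.add_sub_cancel, sq]

lemma eight_mul_card_columnBoundedPairs_fin_three (r : ℕ) :
    8 * #(columnBoundedPairs (Fin 3) (r + 1)) =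
      (r + 2) * (r + 3) * ((r + 2) ^ 2 + (r + 2) + 2) := by
  have hcard := card_columnBoundedPairs_succ_add (Fin 3) r
  have htwo : 2 * (r + 3).choose 2 = (r + 3) * (r + 2) := by
    rw [mul_comm, ← Nat.add_one_mul_choose_eq, Nat.choose_one_right]
  have hfour : 24 * (r + 4).choose 4 = (r + 4) * (r + 3) * (r + 2) * (r + 1) := by
    simpa [Nat.descFactorial, Nat.factorial, mul_comm, mul_assoc, mul_left_comm] using
      (Nat.descFactorial_eq_factorial_mul_choose (r + 4) 4).symm
  have hsymm : (r + 4).choose r = (r + 4).choose 4 := Nat.choose_symm_of_eq_add rfl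
  have hsymm' : (r + 3).choose (r + 1) = (r + 3).choose 2 := Nat.choose_symm_of_eq_add rfl
  simp only [Fintype.card_fin] at hcard
  rw [show 2 * 3 + r - 2 = r + 4 by omega, add_comm 3 r, hsymm, hsymm'] at hcard
  have hdiff : 8 * #(columnBoundedPairs (Fin 3) (r + 1)) + (r + 4) * (r + 3) * (r + 2) * (r + 1) =
      2 * ((r + 3) * (r + 2)) ^ 2 := by
    rw [← htwo, ← hfour]
    linear_combination 8 * hcard
  linear_combination hdiff

end Compositions

section Correspondence

variable {r : ℕ}

lemma mem_columnBoundedPairs_fin_three_iff (hp : (r + 1).Prime) {a b : Fin 3 → ℕ}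
    (ha : ∀ k, a k < r + 1) (hb : ∀ k, b k < r + 1) :
    (a, b) ∈ columnBoundedPairs (Fin 3) r ↔
      (0 < ofDigitVec (r + 1) a ∧ r ∣ ofDigitVec (r + 1) a) ∧
      (0 < ofDigitVec (r + 1) b ∧ r ∣ ofDigitVec (r + 1) b) ∧
      ofDigitVec (r + 1) a + ofDigitVec (r + 1) b + 1 < (r + 1) ^ 3 ∧
      ¬ (r + 1) ∣
        (ofDigitVec (r + 1) a + ofDigitVec (r + 1) b).choose (ofDigitVec (r + 1) a) := by
  have hr : 0 < r := Nat.succ_lt_succ_iff.1 hp.one_lt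
  have hsum : ∑ k, (a + b) k = ∑ k, a k + ∑ k, b k := sum_add_distrib
  simp only [mem_columnBoundedPairs, Nat.pos_iff_ne_zero, Ne,
    ofDigitVec_eq_zero_iff r.succ_ne_zero, dvd_ofDigitVec_iff]
  constructor
  · rintro ⟨⟨hsa, hsb⟩, hab⟩
    have hlt : ofDigitVec (r + 1) a + ofDigitVec (r + 1) b + 1 < (r + 1) ^ 3 := by
      rw [← ofDigitVec_add, ofDigitVec_add_one_lt_iff (a := a + b) hab, hsum]
      omega
    rw [not_dvd_choose_ofDigitVec_add_iff hp ha hb (Nat.lt_of_succ_lt hlt), hsa, hsb]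
    exact ⟨⟨hr.ne', dvd_rfl⟩, ⟨hr.ne', dvd_rfl⟩, hlt, fun k ↦ Nat.lt_succ_of_le (hab k)⟩
  · rintro ⟨⟨ha0, s, hs⟩, ⟨hb0, t, ht⟩, hlt, hdvd⟩
    rw [not_dvd_choose_ofDigitVec_add_iff hp ha hb (Nat.lt_of_succ_lt hlt)] at hdvd
    have hab (k) : a k + b k ≤ r := Nat.le_of_lt_succ (hdvd k)
    rw [← ofDigitVec_add, ofDigitVec_add_one_lt_iff (a := a + b) hab, hsum, hs, ht, ← mul_add,
      mul_comm 3] at hlt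
    have hst : s + t < 3 := Nat.lt_of_mul_lt_mul_left hlt
    have hs0 : s ≠ 0 := by rintro rfl; exact ha0 (by simpa using hs)
    have ht0 : t ≠ 0 := by rintro rfl; exact hb0 (by simpa using ht)
    obtain rfl : s = 1 := by omega
    obtain rfl : t = 1 := by omega
    exact ⟨⟨by simpa using hs, by simpa using ht⟩, hab⟩

lemma mul_add_one_lt_pow_three_iff (hr : 0 < r) {j : ℕ} :
    j * r + 1 < (r + 1) ^ 3 ↔ j ≤ (r + 1) ^ 2 + (r + 1) := by
  have hcube : (r + 1) ^ 3 = ((r + 1) ^ 2 + (r + 1) + 1) * r + 1 := by ring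
  rw [hcube, Nat.add_lt_add_iff_right, Nat.mul_lt_mul_right hr, Nat.lt_succ_iff]

lemma mul_lt_pow_three (hr : 0 < r) {j : ℕ} (hj : j ≤ (r + 1) ^ 2 + (r + 1)) :
    j * r < (r + 1) ^ 3 :=
  Nat.lt_of_succ_lt ((mul_add_one_lt_pow_three_iff hr).2 hj)

lemma exists_eq_mul_of_mem_columnBoundedPairs (hp : (r + 1).Prime) {a b : Fin 3 → ℕ}
    (hab : (a, b) ∈ columnBoundedPairs (Fin 3) r) :
    ∃ i d, ofDigitVec (r + 1) a = i * r ∧ ofDigitVec (r + 1) b = d * r ∧ 0 < i ∧ 0 < d ∧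
      i + d ≤ (r + 1) ^ 2 + (r + 1) ∧ ¬ (r + 1) ∣ ((i + d) * r).choose (i * r) := by
  have hr : 0 < r := Nat.succ_lt_succ_iff.1 hp.one_lt
  obtain ⟨ha, hb⟩ := lt_of_mem_columnBoundedPairs hab
  obtain ⟨⟨ha0, hra⟩, ⟨hb0, hrb⟩, hlt, hdvd⟩ :=
    (mem_columnBoundedPairs_fin_three_iff hp ha hb).1 hab
  obtain ⟨i, hi⟩ := exists_eq_mul_left_of_dvd hra
  obtain ⟨d, hd⟩ := exists_eq_mul_left_of_dvd hrb
  rw [hi, hd, ← add_mul] at hlt hdvd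
  rw [hi] at ha0
  rw [hd] at hb0
  exact ⟨i, d, hi, hd, Nat.pos_of_mul_pos_right ha0, Nat.pos_of_mul_pos_right hb0,
    (mul_add_one_lt_pow_three_iff hr).1 hlt, hdvd⟩

lemma digitVec_mem_columnBoundedPairs (hp : (r + 1).Prime) {i j : ℕ} (hi : 0 < i) (hij : i < j)
    (hj : j ≤ (r + 1) ^ 2 + (r + 1)) (hdvd : ¬ (r + 1) ∣ (j * r).choose (i * r)) :
    (digitVec (r + 1) 3 (i * r), digitVec (r + 1) 3 ((j - i) * r)) ∈
      columnBoundedPairs (Fin 3) r := by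
  have hr : 0 < r := Nat.succ_lt_succ_iff.1 hp.one_lt
  rw [mem_columnBoundedPairs_fin_three_iff hp (digitVec_lt r.succ_pos 3 _)
    (digitVec_lt r.succ_pos 3 _), ofDigitVec_digitVec (mul_lt_pow_three hr (hij.le.trans hj)),
    ofDigitVec_digitVec (mul_lt_pow_three hr ((Nat.sub_le _ _).trans hj)), ← add_mul,
    Nat.add_sub_of_le hij.le]
  exact ⟨⟨Nat.mul_pos hi hr, dvd_mul_left _ _⟩,
    ⟨Nat.mul_pos (Nat.sub_pos_of_lt hij) hr, dvd_mul_left _ _⟩,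
    (mul_add_one_lt_pow_three_iff hr).2 hj, hdvd⟩

lemma card_filter_not_dvd_choose_mul (hp : (r + 1).Prime) :
    #{ij ∈ Icc 1 ((r + 1) ^ 2 + (r + 1)) ×ˢ Icc 1 ((r + 1) ^ 2 + (r + 1)) |
      ij.1 < ij.2 ∧ ¬ (r + 1) ∣ (ij.2 * r).choose (ij.1 * r)} =
      #(columnBoundedPairs (Fin 3) r) := by
  have hr : 0 < r := Nat.succ_lt_succ_iff.1 hp.one_lt
  refine card_nbij'
    (fun ij ↦ (digitVec (r + 1) 3 (ij.1 * r), digitVec (r + 1) 3 ((ij.2 - ij.1) * r)))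
    (fun x ↦ (ofDigitVec (r + 1) x.1 / r,
      ofDigitVec (r + 1) x.1 / r + ofDigitVec (r + 1) x.2 / r)) ?_ ?_ ?_ ?_
  · rintro ⟨i, j⟩ hij
    simp only [coe_filter, mem_product, mem_Icc, Set.mem_ofPred_eq] at hij
    obtain ⟨⟨⟨hi, -⟩, -, hj⟩, hij, hdvd⟩ := hij
    exact digitVec_mem_columnBoundedPairs hp hi hij hj hdvd
  · rintro ⟨a, b⟩ hab
    obtain ⟨i, d, ha, hb, hi, hd, hle, hdvd⟩ := exists_eq_mul_of_mem_columnBoundedPairs hp hab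
    simp only [ha, hb, Nat.mul_div_cancel _ hr, coe_filter, mem_product, mem_Icc, Set.mem_ofPred_eq]
    exact ⟨by omega, by omega, hdvd⟩
  · rintro ⟨i, j⟩ hij
    simp only [coe_filter, mem_product, mem_Icc, Set.mem_ofPred_eq] at hij
    obtain ⟨⟨⟨-, hi⟩, -, hj⟩, hij, -⟩ := hij
    simp only [ofDigitVec_digitVec (mul_lt_pow_three hr hi),
      ofDigitVec_digitVec (mul_lt_pow_three hr ((Nat.sub_le j i).trans hj)),
      Nat.mul_div_cancel _ hr, Nat.add_sub_of_le hij.le]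
  · rintro ⟨a, b⟩ hab
    obtain ⟨ha, hb⟩ := lt_of_mem_columnBoundedPairs hab
    obtain ⟨i, d, hi, hd, -⟩ := exists_eq_mul_of_mem_columnBoundedPairs hp hab
    simp only [hi, hd, Nat.mul_div_cancel _ hr, Nat.add_sub_cancel_left]
    rw [← hi, ← hd, digitVec_ofDigitVec ha, digitVec_ofDigitVec hb]

end Correspondence

/-- The number of pairs `(i, j)` with `1 ≤ i < j ≤ p² + p` and
`p ∤ C(j(p−1), i(p−1))` equals `p(p+1)(p²+p+2)/8`. -/
theorem stmt_12 (p : ℕ) (hp : p.Prime) :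
    ((Finset.Icc 1 (p ^ 2 + p) ×ˢ Finset.Icc 1 (p ^ 2 + p)).filter
      (fun ij : ℕ × ℕ => ij.1 < ij.2 ∧
        ¬ p ∣ Nat.choose (ij.2 * (p - 1)) (ij.1 * (p - 1)))).card
    = p * (p + 1) * (p ^ 2 + p + 2) / 8 := by
  obtain ⟨r, rfl⟩ := Nat.exists_eq_add_of_le' hp.two_le
  rw [show r + 2 - 1 = r + 1 from rfl, card_filter_not_dvd_choose_mul hp,
    ← eight_mul_card_columnBoundedPairs_fin_three, Nat.mul_div_cancel_left _ (by norm_num)]
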